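/- Let G be a finite connected simple graph with |E| = 4k + 2 edges for an integer k ≥ 1, with cycle basis matrix C, graph Laplacian Λ_G, distinguished edge e₀, bijection ι, and canonical integrand f as defined. If h = |E| − |V| + 1 ≠ 2k + 1, then the canonical integral I_G(ω^{4k+1}) (the Lebesgue integral of f over the positive orthant) equals 0. -/

import Mathlib

open MeasureTheory
open scoped Classical

/-- The value `φⁿ_X(V₁, …, V_n) = ∑_σ sign(σ)·tr((X⁻¹V_{σ(1)})⋯(X⁻¹V_{σ(n)}))`
of the bi-invariant form `ωⁿ_X = tr((X⁻¹ dX)ⁿ)` at `X` on tangent vectors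
`V₁, …, V_n` (factorial-free convention). -/
noncomputable def phiForm {m : ℕ} (n : ℕ) (X : Matrix (Fin m) (Fin m) ℝ)
    (Vs : Fin n → Matrix (Fin m) (Fin m) ℝ) : ℝ :=
  ∑ σ : Equiv.Perm (Fin n),
    ((Equiv.Perm.sign σ : ℤ) : ℝ) *
      (List.ofFn (fun i => X⁻¹ * Vs (σ i))).prod.trace

/-- The incidence matrix of an oriented graph with source map `src` and
target map `tgt`. -/
noncomputable def incidence {V : Type*} [Fintype V] (G : SimpleGraph V)
    (src tgt : G.edgeSet → V) : Matrix V G.edgeSet ℤ :=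
  fun v e => (if v = tgt e then 1 else 0) - (if v = src e then 1 else 0)

/-- The graph Laplacian `Λ_G(x) = Cᵀ · diagonal(x) · C` associated to a cycle
basis matrix `C`. -/
noncomputable def graphLap {E : Type*} [Fintype E] {h : ℕ}
    (C : Matrix E (Fin h) ℤ) (x : E → ℝ) : Matrix (Fin h) (Fin h) ℝ :=
  (C.map (Int.cast : ℤ → ℝ)).transpose * Matrix.diagonal x *
    C.map (Int.cast : ℤ → ℝ)

/-- The affine chart `x(e₀) = 1`: extend `u : E \ {e₀} → ℝ` to `E → ℝ` by
sending `e₀` to `1`. -/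
noncomputable def chart {V : Type*} [Fintype V] (G : SimpleGraph V) (e₀ : G.edgeSet)
    (u : {e : G.edgeSet // e ≠ e₀} → ℝ) : G.edgeSet → ℝ :=
  fun e => if h : e = e₀ then 1 else u ⟨e, h⟩

/-- The canonical integrand: the pullback to the affine chart `x(e₀) = 1` of
the canonical form `ω^{4k+1} = tr((Λ⁻¹ dΛ)^{4k+1})` on the cell of `G`. -/
noncomputable def canonicalIntegrand {V : Type*} [Fintype V]
    (G : SimpleGraph V) {h : ℕ} (C : Matrix G.edgeSet (Fin h) ℤ)
    (k : ℕ) (e₀ : G.edgeSet) (ι : Fin (4 * k + 1) ≃ {e : G.edgeSet // e ≠ e₀})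
    (u : {e : G.edgeSet // e ≠ e₀} → ℝ) : ℝ :=
  phiForm (4 * k + 1) (graphLap C (chart G e₀ u))
    (fun i => graphLap C (fun e => if e = (ι i : {e : G.edgeSet // e ≠ e₀}).val then 1 else 0))

/-! Since `∂Λ/∂x_e = C_eᵀ C_e` for the row `C_e` of `C`, the canonical form of degree `4k + 1` is
the alternating sum of the cyclic products of the entries `C_e Λ⁻¹ C_fᵀ` of the edge matrix
`K = C Λ⁻¹ Cᵀ`. By the Amitsur–Levitzki theorem such an alternating sum vanishes when the matrix
has rank at most `2k`. If `h ≤ 2k`, then already `Λ` has size at most `2k`. If `h ≥ 2k + 2`, note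
that the diagonal of `K` does not enter, so `K` may be replaced by `K - diag(x⁻¹)`; this matrix
annihilates the `h` independent columns of `diag(x) C`, hence has rank at most `4k + 2 - h ≤ 2k`.

The Amitsur–Levitzki theorem is proved following Rosset: `A = ∑ i, θ_i A_i` with anticommuting
`θ_i` has `s_n(A₁, …, A_n) θ₁ ⋯ θ_n` as its `n`-th power. The entries of `A²` commute, and its
powers are traceless because `tr(A · A^(2j+1)) = -tr(A^(2j+1) · A)`; hence `A²` is nilpotent of
order at most its size. -/

open Matrix Polynomial

section TracePow

variable {m R : Type*} [Fintype m] [DecidableEq m] [CommRing R]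

/-- Jacobi's formula. -/
theorem derivative_det (M : Matrix m m R[X]) :
    derivative M.det = (M.adjugate * M.map derivative).trace := by
  have hdiag (i : m) : (M.adjugate * M.map derivative) i i =
      (M.updateCol i fun j => derivative (M j i)).det := by
    rw [← cramer_apply, cramer_eq_adjugate_mulVec]
    rfl
  simp only [trace, diag_apply, hdiag, det_apply, derivative_sum]
  rw [Finset.sum_comm]
  refine Finset.sum_congr rfl fun σ _ => ?_
  rw [← Finset.smul_sum, Units.smul_def, Units.smul_def, map_zsmul, derivative_prod_finset]
  congr 1
  refine Finset.sum_congr rfl fun i _ => ?_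
  rw [← Finset.mul_prod_erase Finset.univ _ (Finset.mem_univ i), mul_comm, updateCol_self]
  congr 1
  exact Finset.prod_congr rfl fun j hj => (updateCol_ne (Finset.ne_of_mem_erase hj)).symm

theorem derivative_charpolyRev (M : Matrix m m R) :
    derivative M.charpolyRev =
      -(adjugate (1 - (X : R[X]) • M.map C) * M.map C).trace := by
  have hder : (1 - (X : R[X]) • M.map C).map derivative = -M.map C := by
    ext1 i j
    by_cases hij : i = j <;> simp [one_apply, hij]
  rw [charpolyRev, derivative_det, hder, Matrix.mul_neg, trace_neg]

theorem trace_adjugate_mul_map_C_eq_zero {M : Matrix m m R}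
    (hM : ∀ j, (M ^ (j + 1)).trace = 0) :
    (adjugate (1 - (X : R[X]) • M.map C) * M.map C).trace = 0 := by
  set N := adjugate (1 - (X : R[X]) • M.map C)
  have hN : N - (X : R[X]) • (N * M.map C) = M.charpolyRev • 1 := by
    rw [← Matrix.mul_smul, charpolyRev, ← adjugate_mul, Matrix.mul_sub, Matrix.mul_one]
  have hpow (j : ℕ) : ((M.map C) ^ (j + 1)).trace = 0 := by
    rw [← RingHom.mapMatrix_apply, ← map_pow, RingHom.mapMatrix_apply,
      ← AddMonoidHom.map_trace, hM, map_zero]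
  have hstep (j : ℕ) :
      (N * M.map C ^ (j + 1)).trace = X * (N * M.map C ^ (j + 2)).trace := by
    have h := congrArg (fun B => (B * M.map C ^ (j + 1)).trace) hN
    simp only [Matrix.sub_mul, Matrix.smul_mul, Matrix.one_mul, trace_sub, trace_smul,
      Matrix.mul_assoc, ← pow_succ', smul_eq_mul, hpow, mul_zero] at h
    exact sub_eq_zero.1 h
  have hdvd (d j : ℕ) : X ^ d ∣ (N * M.map C ^ (j + 1)).trace := by
    induction d generalizing j with
    | zero => exact one_dvd _
    | succ d ih =>
      rw [hstep, pow_succ']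
      exact mul_dvd_mul_left _ (ih (j + 1))
  ext d
  simpa using X_pow_dvd_iff.1 (hdvd (d + 1) 0) d d.lt_succ_self

theorem charpolyRev_eq_one_of_forall_trace_pow_eq_zero [IsAddTorsionFree R] {M : Matrix m m R}
    (hM : ∀ j, (M ^ (j + 1)).trace = 0) : M.charpolyRev = 1 := by
  have hder : derivative M.charpolyRev = 0 := by
    rw [derivative_charpolyRev, trace_adjugate_mul_map_C_eq_zero hM, neg_zero]
  rw [eq_C_of_derivative_eq_zero hder, coeff_zero_eq_eval_zero, eval_charpolyRev, map_one]

theorem pow_card_eq_zero_of_forall_trace_pow_eq_zero [IsAddTorsionFree R] {M : Matrix m m R}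
    (hM : ∀ j, (M ^ (j + 1)).trace = 0) : M ^ Fintype.card m = 0 := by
  nontriviality R
  have hchar : M.charpoly = X ^ Fintype.card m := by
    rw [← reflect_one, ← charpolyRev_eq_one_of_forall_trace_pow_eq_zero hM, ← reverse_charpoly,
      reverse, charpoly_natDegree_eq_dim, reflect_reflect]
  simpa [hchar] using aeval_self_charpoly M

end TracePow

theorem trace_mul_eq_neg_of_anticommute {m n R : Type*} [Fintype m] [Fintype n]
    [NonUnitalNonAssocRing R] (P : Matrix m n R) (Q : Matrix n m R)
    (h : ∀ a b c d, P a b * Q c d = -(Q c d * P a b)) :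
    (P * Q).trace = -(Q * P).trace := by
  simp only [trace, diag_apply, mul_apply, h, Finset.sum_neg_distrib]
  rw [Finset.sum_comm]

theorem commute_mul_of_anticommute {R : Type*} [NonUnitalRing R] {x y z : R}
    (hy : x * y = -(y * x)) (hz : x * z = -(z * x)) : Commute x (y * z) := by
  rw [Commute, SemiconjBy, ← mul_assoc, hy, neg_mul, mul_assoc, hz, mul_neg, neg_neg, mul_assoc]

section Anticommute

variable {m S : Type*} [Fintype m] [DecidableEq m] [Ring S] [IsAddTorsionFree S]

theorem trace_sq_pow_succ_eq_zero_of_anticommute {A : Matrix m m S}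
    (hA : ∀ a b c d, A a b * A c d = -(A c d * A a b)) (j : ℕ) :
    ((A * A) ^ (j + 1)).trace = 0 := by
  have hcomm (a b c d : m) : Commute (A a b) (((A * A) ^ j) c d) := by
    induction j generalizing c d with
    | zero => by_cases hcd : c = d <;> simp [hcd]
    | succ j ih =>
      rw [pow_succ, mul_apply]
      refine Commute.sum_right _ _ _ fun e _ => (ih c e).mul_right ?_
      rw [mul_apply]
      exact Commute.sum_right _ _ _ fun f _ => commute_mul_of_anticommute (hA ..) (hA ..)
  have hAZ : A * (A * A) ^ j = (A * A) ^ j * A :=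
    ((Commute.refl A).mul_right (Commute.refl A)).pow_right j
  have hneg : (A * (A * (A * A) ^ j)).trace = -((A * (A * A) ^ j) * A).trace := by
    refine trace_mul_eq_neg_of_anticommute _ _ fun a b c d => ?_
    rw [mul_apply, Finset.mul_sum, Finset.sum_mul, ← Finset.sum_neg_distrib]
    refine Finset.sum_congr rfl fun e _ => ?_
    rw [← mul_assoc, hA, neg_mul, mul_assoc, (hcomm a b e d).eq, mul_assoc]
  rw [Matrix.mul_assoc, ← hAZ, ← Matrix.mul_assoc, ← pow_succ'] at hneg
  exact self_eq_neg.1 hneg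

open scoped IsMulCommutative in
theorem pow_two_mul_card_eq_zero_of_anticommute {A : Matrix m m S}
    (hA : ∀ a b c d, A a b * A c d = -(A c d * A a b)) : A ^ (2 * Fintype.card m) = 0 := by
  let s : Set S := {z | ∃ a b c d, A a b * A c d = z}
  have hs : ∀ x ∈ s, ∀ y ∈ s, x * y = y * x := by
    rintro _ ⟨a, b, c, d, rfl⟩ _ ⟨a', b', c', d', rfl⟩
    exact (commute_mul_of_anticommute (hA ..) (hA ..)).mul_left
      (commute_mul_of_anticommute (hA ..) (hA ..))
  have := Subring.isMulCommutative_closure hs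
  let T := Subring.closure s
  have hinj : Function.Injective T.subtype := Subtype.val_injective
  have : IsAddTorsionFree T := hinj.isAddTorsionFree T.subtype.toAddMonoidHom
  obtain ⟨B, hB⟩ : ∃ B : Matrix m m T, T.subtype.mapMatrix B = A * A :=
    ⟨of fun a b => ⟨(A * A) a b, sum_mem fun c _ => Subring.subset_closure ⟨a, c, c, b, rfl⟩⟩,
      rfl⟩
  have htrace (j : ℕ) : (B ^ (j + 1)).trace = 0 := by
    apply hinj
    rw [map_zero, ← trace_sq_pow_succ_eq_zero_of_anticommute hA j, ← hB, ← map_pow]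
    exact AddMonoidHom.map_trace T.subtype _
  have hzero := congrArg T.subtype.mapMatrix (pow_card_eq_zero_of_forall_trace_pow_eq_zero htrace)
  rwa [map_pow, hB, map_zero, ← sq, ← pow_mul] at hzero

end Anticommute

/-- The standard polynomial `s_n(a₁, …, a_n) = ∑_σ sign(σ) a_{σ(1)} ⋯ a_{σ(n)}` in `n`
noncommuting variables, as a function on a ring. -/
def standardPolynomial {A : Type*} [Ring A] {n : ℕ} (a : Fin n → A) : A :=
  ∑ σ : Equiv.Perm (Fin n), (Equiv.Perm.sign σ : ℤ) • (List.ofFn fun i => a (σ i)).prod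

theorem map_standardPolynomial {A B : Type*} [Ring A] [Ring B] {n : ℕ} (f : A →+* B)
    (a : Fin n → A) : f (standardPolynomial a) = standardPolynomial fun i => f (a i) := by
  simp only [standardPolynomial, map_sum, map_zsmul, map_list_prod, List.map_ofFn,
    Function.comp_def]

section AmitsurLevitzki

variable {m R : Type*} [Fintype m] [DecidableEq m] [CommRing R] {n : ℕ}

theorem prod_ofFn_map_smul {S : Type*} [Ring S] [Algebra R S] (A : Fin n → Matrix m m R)
    (θ : Fin n → S) :
    (List.ofFn fun i => (A i).map (· • θ i)).prod =
      (List.ofFn A).prod.map (· • (List.ofFn θ).prod) := by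
  induction n with
  | zero => ext1 a b; by_cases hab : a = b <;> simp [hab]
  | succ n ih =>
    rw [List.ofFn_succ, List.prod_cons, ih]
    ext1 a b
    simp only [mul_apply, map_apply, List.ofFn_succ, List.prod_cons, Finset.sum_smul,
      smul_mul_smul_comm]

theorem prod_ofFn_map_smul_ι {M : Type*} [AddCommGroup M] [Module R M]
    (A : Fin n → Matrix m m R) (e : Fin n → M) :
    (List.ofFn fun i => (A i).map (· • ExteriorAlgebra.ι R (e i))).prod =
      (List.ofFn A).prod.map (· • ExteriorAlgebra.ιMulti R n e) := by
  rw [prod_ofFn_map_smul, ExteriorAlgebra.ιMulti_apply]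

theorem standardPolynomial_map_smul_ιMulti {M : Type*} [AddCommGroup M] [Module R M]
    (A : Fin n → Matrix m m R) (e : Fin n → M) :
    (standardPolynomial A).map (· • ExteriorAlgebra.ιMulti R n e) =
      ∑ σ : Equiv.Perm (Fin n), (List.ofFn fun i => A (σ i)).prod.map
        (· • ExteriorAlgebra.ιMulti R n (e ∘ σ)) := by
  ext1 a b
  simp only [standardPolynomial, map_apply, Matrix.sum_apply, Matrix.smul_apply, Finset.sum_smul,
    AlternatingMap.map_perm, Units.smul_def]
  exact Finset.sum_congr rfl fun σ _ => by rw [smul_assoc, smul_comm]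

theorem pow_ι_sum_smul_eq_standardPolynomial_map_smul {M : Type*} [AddCommGroup M] [Module R M]
    (A : Fin n → Matrix m m R) (e : Fin n → M) :
    (of fun a b => ExteriorAlgebra.ι R (∑ i, A i a b • e i)) ^ n =
      (standardPolynomial A).map (· • ExteriorAlgebra.ιMulti R n e) := by
  have hsum : (of fun a b => ExteriorAlgebra.ι R (∑ i, A i a b • e i)) =
      ∑ i, (A i).map (· • ExteriorAlgebra.ι R (e i)) := by
    ext1 a b
    simp [Matrix.sum_apply]
  rw [hsum, standardPolynomial_map_smul_ιMulti,
    ← MultilinearMap.mkPiAlgebraFin_apply_const (R := ℤ), MultilinearMap.map_sum]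
  symm
  refine Fintype.sum_of_injective (fun σ : Equiv.Perm (Fin n) => (σ : Fin n → Fin n))
    DFunLike.coe_injective _ _ (fun s hs => ?_) fun σ => ?_
  · have hs' : ¬ Function.Injective (e ∘ s) := fun hinj =>
      hs ⟨Equiv.ofBijective s (Finite.injective_iff_bijective.1 hinj.of_comp), rfl⟩
    rw [MultilinearMap.mkPiAlgebraFin_apply]
    refine (prod_ofFn_map_smul_ι (fun i => A (s i)) (e ∘ s)).trans ?_
    rw [AlternatingMap.map_eq_zero_of_not_injective _ _ hs']
    ext1 a b
    simp
  · exact (prod_ofFn_map_smul_ι (fun i => A (σ i)) (e ∘ σ)).symm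

theorem standardPolynomial_eq_zero_of_algebraRat [Algebra ℚ R] (hn : 2 * Fintype.card m ≤ n)
    (A : Fin n → Matrix m m R) : standardPolynomial A = 0 := by
  let e (i : Fin n) : Fin n → R := Pi.single i 1
  have : IsAddTorsionFree (ExteriorAlgebra R (Fin n → R)) := .of_module_rat _
  have hpow := pow_eq_zero_of_le hn <| pow_two_mul_card_eq_zero_of_anticommute
    (A := of fun a b => ExteriorAlgebra.ι R (∑ i, A i a b • e i)) fun a b c d =>
      eq_neg_of_add_eq_zero_left (ExteriorAlgebra.ι_add_mul_swap _ _)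
  rw [pow_ι_sum_smul_eq_standardPolynomial_map_smul] at hpow
  let φ : ExteriorAlgebra R (Fin n → R) →ₗ[R] R :=
    ExteriorAlgebra.liftAlternating (Pi.single n detRowAlternating)
  have hφ : φ (ExteriorAlgebra.ιMulti R n e) = 1 := by
    rw [ExteriorAlgebra.liftAlternating_apply_ιMulti, Pi.single_eq_same]
    have he : e = (1 : Matrix (Fin n) (Fin n) R) := by
      ext i j
      simp [e, one_apply, Pi.single_apply, eq_comm]
    exact (congrArg det he).trans det_one
  ext a b
  simpa [hφ] using congrArg φ (congrFun₂ hpow a b)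

/-- The **Amitsur–Levitzki theorem**. -/
theorem standardPolynomial_eq_zero (hn : 2 * Fintype.card m ≤ n) (A : Fin n → Matrix m m R) :
    standardPolynomial A = 0 := by
  let generic (i : Fin n) : Matrix m m (MvPolynomial (Fin n × m × m) ℤ) :=
    of fun a b => MvPolynomial.X (i, a, b)
  have hgeneric : standardPolynomial generic = 0 := by
    have hinj : Function.Injective (MvPolynomial.map (σ := Fin n × m × m) (Int.castRingHom ℚ)) :=
      MvPolynomial.map_injective _ Int.cast_injective
    refine Matrix.map_injective hinj ?_
    change (MvPolynomial.map (Int.castRingHom ℚ)).mapMatrix _ = RingHom.mapMatrix _ 0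
    rw [map_standardPolynomial, standardPolynomial_eq_zero_of_algebraRat hn, map_zero]
  let f := MvPolynomial.eval₂Hom (Int.castRingHom R) fun x : Fin n × m × m => A x.1 x.2.1 x.2.2
  have hA (i : Fin n) : f.mapMatrix (generic i) = A i := by
    ext a b
    simp [f, generic]
  simpa only [map_standardPolynomial, hA, map_zero] using congrArg f.mapMatrix hgeneric

end AmitsurLevitzki

section CyclicAlternation

/-- The alternating sum `∑_σ sign(σ) K_{σ(0)σ(1)} K_{σ(1)σ(2)} ⋯ K_{σ(n)σ(0)}` of cyclic products of
entries of `K`; it computes `standardPolynomial` traces on rank one matrices. The successor `i + 1`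
is taken in `Fin (n + 1)`, where it wraps around. -/
def cyclicAlternation {R : Type*} [CommRing R] {n : ℕ}
    (K : Matrix (Fin (n + 1)) (Fin (n + 1)) R) : R :=
  ∑ σ : Equiv.Perm (Fin (n + 1)), (Equiv.Perm.sign σ : ℤ) • ∏ i, K (σ i) (σ (i + 1))

variable {m R : Type*} [Fintype m] [CommRing R] {n : ℕ}

theorem prod_ofFn_vecMulVec [DecidableEq m] (w v : Fin (n + 1) → m → R) :
    (List.ofFn fun i => vecMulVec (w i) (v i)).prod =
      (∏ i : Fin n, v i.castSucc ⬝ᵥ w i.succ) • vecMulVec (w 0) (v (Fin.last n)) := by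
  induction n with
  | zero => simp
  | succ n ih =>
    rw [List.ofFn_succ, List.prod_cons, ih (fun i => w i.succ) (fun i => v i.succ),
      Fin.prod_univ_succ, Matrix.mul_smul, vecMulVec_mul_vecMulVec, vecMulVec_smul, smul_smul,
      mul_comm]
    rfl

theorem trace_prod_ofFn_vecMulVec [DecidableEq m] (w v : Fin (n + 1) → m → R) :
    (List.ofFn fun i => vecMulVec (w i) (v i)).prod.trace = ∏ i, v i ⬝ᵥ w (i + 1) := by
  rw [prod_ofFn_vecMulVec, trace_smul, trace_vecMulVec, Fin.prod_univ_castSucc, smul_eq_mul,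
    dotProduct_comm (w 0)]
  simp only [Fin.coeSucc_eq_succ, Fin.last_add_one]

theorem trace_standardPolynomial_vecMulVec [DecidableEq m] (w v : Fin (n + 1) → m → R) :
    (standardPolynomial fun i => vecMulVec (w i) (v i)).trace =
      cyclicAlternation (of fun i j => v i ⬝ᵥ w j) := by
  rw [standardPolynomial, trace_sum]
  refine Finset.sum_congr rfl fun σ _ => ?_
  rw [trace_smul, trace_prod_ofFn_vecMulVec (fun i => w (σ i)) fun i => v (σ i)]
  rfl

theorem cyclicAlternation_mul_eq_zero (hn : 2 * Fintype.card m ≤ n + 1)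
    (U : Matrix (Fin (n + 1)) m R) (W : Matrix m (Fin (n + 1)) R) :
    cyclicAlternation (U * W) = 0 := by
  classical
  have h := trace_standardPolynomial_vecMulVec (fun j => W.col j) fun i => U.row i
  rw [standardPolynomial_eq_zero hn, trace_zero] at h
  exact h.symm

theorem exists_eq_mul_of_rank {p q K : Type*} [Fintype q] [Finite p] [Field K]
    (A : Matrix p q K) :
    ∃ (U : Matrix p (Fin A.rank) K) (W : Matrix (Fin A.rank) q K), A = U * W := by
  classical
  let b := Module.finBasisOfFinrankEq K (LinearMap.range A.mulVecLin) (n := A.rank) rfl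
  have hcol (j : q) : A.col j ∈ LinearMap.range A.mulVecLin := ⟨Pi.single j 1, by simp⟩
  refine ⟨of fun i c => (b c : p → K) i, of fun c j => b.repr ⟨A.col j, hcol j⟩ c, ?_⟩
  ext i j
  have h := congrFun (congrArg Subtype.val (b.sum_repr ⟨A.col j, hcol j⟩)) i
  simp only [Submodule.coe_sum, Finset.sum_apply, Submodule.coe_smul, Pi.smul_apply,
    smul_eq_mul] at h
  simpa only [mul_apply, of_apply, mul_comm, col_apply] using h.symm

theorem cyclicAlternation_eq_zero_of_two_mul_rank_le {F : Type*} [Field F]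
    {K : Matrix (Fin (n + 1)) (Fin (n + 1)) F} (hK : 2 * K.rank ≤ n + 1) :
    cyclicAlternation K = 0 := by
  obtain ⟨U, W, hUW⟩ := exists_eq_mul_of_rank K
  rw [hUW]
  exact cyclicAlternation_mul_eq_zero (by rwa [Fintype.card_fin]) U W

theorem cyclicAlternation_sub_diagonal (hn : n ≠ 0) (K : Matrix (Fin (n + 1)) (Fin (n + 1)) R)
    (d : Fin (n + 1) → R) : cyclicAlternation (K - diagonal d) = cyclicAlternation K := by
  have hne (i : Fin (n + 1)) : i ≠ i + 1 := fun h => hn (by simpa using left_eq_add.1 h)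
  simp only [cyclicAlternation, Matrix.sub_apply,
    diagonal_apply_ne _ ((Equiv.injective _).ne (hne _)), sub_zero]

end CyclicAlternation

theorem rank_mul_inv_mul_transpose_sub_diagonal_inv_add_card_le {E m K : Type*} [Fintype E]
    [DecidableEq E] [Fintype m] [DecidableEq m] [Field K] (D : Matrix E m K) {x : E → K}
    (hx : ∀ e, x e ≠ 0) (hΛ : IsUnit (Dᵀ * diagonal x * D)) :
    (D * (Dᵀ * diagonal x * D)⁻¹ * Dᵀ - diagonal fun e => (x e)⁻¹).rank + Fintype.card m ≤
      Fintype.card E := by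
  have hinv : (Dᵀ * diagonal x * D)⁻¹ * Dᵀ * (diagonal x * D) = 1 := by
    rw [Matrix.mul_assoc, ← Matrix.mul_assoc Dᵀ,
      nonsing_inv_mul _ ((isUnit_iff_isUnit_det _).1 hΛ)]
  have hrank : Fintype.card m ≤ (diagonal x * D).rank := by
    rw [← rank_one (R := K) (n := m), ← hinv]
    exact rank_mul_le_right _ _
  have hzero : (D * (Dᵀ * diagonal x * D)⁻¹ * Dᵀ - diagonal fun e => (x e)⁻¹) *
      (diagonal x * D) = 0 := by
    rw [Matrix.sub_mul, Matrix.mul_assoc D, Matrix.mul_assoc D, hinv, Matrix.mul_one,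
      ← Matrix.mul_assoc, diagonal_mul_diagonal]
    simp [hx]
  exact (Nat.add_le_add_left hrank _).trans (rank_add_rank_le_card_of_mul_eq_zero hzero)

theorem mulVec_injective_map_algebraMap {m n R S : Type*} [Fintype n] [Finite m] [CommRing R]
    [CommRing S] [IsDomain S] [Algebra R S] [FaithfulSMul R S] {M : Matrix m n R}
    (hM : Function.Injective M.mulVec) : Function.Injective (M.map (algebraMap R S)).mulVec := by
  rw [mulVec_injective_iff] at hM ⊢
  exact linearIndependent_algebraMap_comp_iff.2 hM

theorem phiForm_eq_trace_standardPolynomial {h n : ℕ} (X : Matrix (Fin h) (Fin h) ℝ)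
    (Vs : Fin n → Matrix (Fin h) (Fin h) ℝ) :
    phiForm n X Vs = (standardPolynomial fun i => X⁻¹ * Vs i).trace := by
  simp only [phiForm, standardPolynomial, trace_sum, trace_smul, ← zsmul_eq_mul]

theorem phiForm_eq_zero_of_two_mul_le {h n : ℕ} (hn : 2 * h ≤ n) (X : Matrix (Fin h) (Fin h) ℝ)
    (Vs : Fin n → Matrix (Fin h) (Fin h) ℝ) : phiForm n X Vs = 0 := by
  rw [phiForm_eq_trace_standardPolynomial,
    standardPolynomial_eq_zero (by rwa [Fintype.card_fin]), trace_zero]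

section GraphLap

variable {E : Type*} [Fintype E] {h n : ℕ} {C : Matrix E (Fin h) ℤ} {x : E → ℝ}

/-- The matrix `C Λ(x)⁻¹ Cᵀ` indexed by the edges: the bilinear form `Λ(x)⁻¹` evaluated on the rows
of `C`. Its cyclic products are the traces occurring in the canonical form. -/
noncomputable def edgeGreenMatrix (C : Matrix E (Fin h) ℤ) (x : E → ℝ) : Matrix E E ℝ :=
  C.map (Int.cast : ℤ → ℝ) * (graphLap C x)⁻¹ * (C.map (Int.cast : ℤ → ℝ))ᵀ

theorem graphLap_indicator [DecidableEq E] (C : Matrix E (Fin h) ℤ) (e : E) :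
    graphLap C (fun e' => if e' = e then 1 else 0) =
      vecMulVec (C.map (Int.cast : ℤ → ℝ) e) (C.map (Int.cast : ℤ → ℝ) e) := by
  ext a b
  simp [graphLap, mul_apply, vecMulVec_apply, diagonal_apply]

theorem phiForm_graphLap_indicator [DecidableEq E] (C : Matrix E (Fin h) ℤ) (x : E → ℝ)
    (ε : Fin (n + 1) → E) :
    phiForm (n + 1) (graphLap C x)
        (fun i => graphLap C (fun e => if e = ε i then 1 else 0)) =
      cyclicAlternation ((edgeGreenMatrix C x).submatrix ε ε) := by
  simp only [phiForm_eq_trace_standardPolynomial, graphLap_indicator, mul_vecMulVec,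
    trace_standardPolynomial_vecMulVec, edgeGreenMatrix, Matrix.mul_assoc]
  rfl

theorem cyclicAlternation_edgeGreenMatrix_eq_zero (hn : n ≠ 0)
    (hE : 2 * Fintype.card E ≤ n + 1 + 2 * h) (hx : ∀ e, x e ≠ 0) (hΛ : IsUnit (graphLap C x))
    {ε : Fin (n + 1) → E} (hε : Function.Injective ε) :
    cyclicAlternation ((edgeGreenMatrix C x).submatrix ε ε) = 0 := by
  have hrank : (edgeGreenMatrix C x - diagonal fun e => (x e)⁻¹).rank + Fintype.card (Fin h) ≤
      Fintype.card E :=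
    rank_mul_inv_mul_transpose_sub_diagonal_inv_add_card_le _ hx hΛ
  have hsub := rank_submatrix_le (edgeGreenMatrix C x - diagonal fun e => (x e)⁻¹) ε ε
  rw [Fintype.card_fin] at hrank
  rw [← cyclicAlternation_sub_diagonal hn _ ((fun e => (x e)⁻¹) ∘ ε), ← submatrix_diagonal _ _ hε,
    ← Pi.sub_apply, ← Pi.sub_apply, ← submatrix_sub]
  exact cyclicAlternation_eq_zero_of_two_mul_rank_le (by lia)

theorem posDef_graphLap (hinj : Function.Injective C.mulVecLin) (hx : ∀ e, 0 < x e) :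
    (graphLap C x).PosDef := by
  have hpos := (PosDef.diagonal hx).conjTranspose_mul_mul_same
    (mulVec_injective_map_algebraMap (S := ℝ) hinj)
  rwa [conjTranspose_eq_transpose_of_trivial] at hpos

end GraphLap

section CanonicalIntegral

variable {V : Type*} [Fintype V] {G : SimpleGraph V} {e₀ : G.edgeSet}
  {u : {e : G.edgeSet // e ≠ e₀} → ℝ}

theorem chart_pos (hu : ∀ e, 0 < u e) (e : G.edgeSet) : 0 < chart G e₀ u e := by
  unfold chart
  split_ifs with he
  · exact one_pos
  · exact hu ⟨e, he⟩

theorem canonicalIntegrand_eq_zero {k h : ℕ} (hk : 1 ≤ k)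
    (hE : Fintype.card G.edgeSet = 4 * k + 2) {C : Matrix G.edgeSet (Fin h) ℤ}
    (hinj : Function.Injective C.mulVecLin) (ι : Fin (4 * k + 1) ≃ {e : G.edgeSet // e ≠ e₀})
    (hne : h ≠ 2 * k + 1) (hu : ∀ e, 0 < u e) : canonicalIntegrand G C k e₀ ι u = 0 := by
  have hx := chart_pos hu
  rw [canonicalIntegrand]
  rcases hne.lt_or_gt with hlt | hgt
  · exact phiForm_eq_zero_of_two_mul_le (by lia) _ _
  · rw [phiForm_graphLap_indicator C _ fun i => (ι i).val]
    exact cyclicAlternation_edgeGreenMatrix_eq_zero (by lia) (by lia) (fun e => (hx e).ne')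
      (posDef_graphLap hinj hx).isUnit (Subtype.val_injective.comp ι.injective)

end CanonicalIntegral

theorem canonicalIntegral_eq_zero_of_loopNumber_ne_general {V : Type*} [Fintype V]
    (G : SimpleGraph V) {k h : ℕ} (hk : 1 ≤ k) (hE : Fintype.card G.edgeSet = 4 * k + 2)
    (C : Matrix G.edgeSet (Fin h) ℤ) (hinj : Function.Injective C.mulVecLin)
    (e₀ : G.edgeSet) (ι : Fin (4 * k + 1) ≃ {e : G.edgeSet // e ≠ e₀}) (hne : h ≠ 2 * k + 1) :
    ∫ u in {u : {e : G.edgeSet // e ≠ e₀} → ℝ | ∀ e, 0 < u e},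
      canonicalIntegrand G C k e₀ ι u = 0 :=
  setIntegral_eq_zero_of_forall_eq_zero fun _ => canonicalIntegrand_eq_zero hk hE hinj ι hne

/-- If the loop number `h` differs from `2k + 1`, the canonical integral
`I_G(ω^{4k+1})` vanishes. -/
theorem canonicalIntegral_eq_zero_of_loopNumber_ne
    {V : Type*} [Fintype V] (G : SimpleGraph V) (hG : G.Connected)
    (src tgt : G.edgeSet → V)
    (hor : ∀ e : G.edgeSet, (e : Sym2 V) = s(src e, tgt e))
    (k : ℕ) (hk : 1 ≤ k)
    (hE : Fintype.card G.edgeSet = 4 * k + 2)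
    (h : ℕ)
    (hh : (h : ℤ) = (Fintype.card G.edgeSet : ℤ) - Fintype.card V + 1)
    (C : Matrix G.edgeSet (Fin h) ℤ)
    (hinj : Function.Injective C.mulVecLin)
    (hker : LinearMap.range C.mulVecLin =
      LinearMap.ker (incidence G src tgt).mulVecLin)
    (e₀ : G.edgeSet) (ι : Fin (4 * k + 1) ≃ {e : G.edgeSet // e ≠ e₀})
    (hne : h ≠ 2 * k + 1) :
    ∫ u in {u : {e : G.edgeSet // e ≠ e₀} → ℝ | ∀ e, 0 < u e},
      canonicalIntegrand G C k e₀ ι u = 0 :=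
  canonicalIntegral_eq_zero_of_loopNumber_ne_general G hk hE C hinj e₀ ι hne
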